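/- Under the stated setup and assumptions, for every p ∈ [1,∞] the Schatten-p norm of the sines of the canonical angles between the column spaces of U_k and Û satisfies (Σ_{j=1}^k sin^p θ_j)^{1/p} ≤ γ_k^{2q} · (‖Σ_⊥‖_p / σ_k) · ‖Ω_2Ω_1†‖₂ (with the maximum of the sines on the left for p = ∞). -/

import Mathlib

open scoped ENNReal
open Matrix

/-- The `j`-th largest singular value (0-indexed) of a complex matrix,
obtained as the decreasingly sorted square roots of the eigenvalues of `Mᴴ * M`. -/
noncomputable def sval {m n : ℕ} (M : Matrix (Fin m) (Fin n) ℂ) (j : ℕ) : ℝ :=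
  (List.insertionSort (· ≥ ·)
    ((List.ofFn (Matrix.isHermitian_conjTranspose_mul_self M).eigenvalues).map Real.sqrt)).getD j 0

/-- The Schatten-`p` norm (`p = ∞` gives the spectral norm). -/
noncomputable def schatten {m n : ℕ} (p : ℝ≥0∞) (M : Matrix (Fin m) (Fin n) ℂ) : ℝ :=
  if p = ⊤ then sval M 0
  else (∑ j ∈ Finset.range n, sval M j ^ p.toReal) ^ (1 / p.toReal)

/-- Moore–Penrose pseudoinverse of a full-row-rank matrix. -/
noncomputable def rpinv {a b : ℕ} (M : Matrix (Fin a) (Fin b) ℂ) : Matrix (Fin b) (Fin a) ℂ :=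
  Mᴴ * (M * Mᴴ)⁻¹

/-- Rectangular diagonal matrix with entries `σ (off), σ (off+1), …` on the diagonal. -/
noncomputable def diagRect (σ : ℕ → ℝ) (off a b : ℕ) : Matrix (Fin a) (Fin b) ℂ :=
  Matrix.of fun i j => if (i : ℕ) = (j : ℕ) then (σ (off + (i : ℕ)) : ℂ) else 0

/-- The first `b` columns of a matrix with `b + c` columns. -/
def colsL {a b c : ℕ} (M : Matrix (Fin a) (Fin (b + c)) ℂ) : Matrix (Fin a) (Fin b) ℂ :=
  M.submatrix id (Fin.castAdd c)

/-- The last `c` columns of a matrix with `b + c` columns. -/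
def colsR {a b c : ℕ} (M : Matrix (Fin a) (Fin (b + c)) ℂ) : Matrix (Fin a) (Fin c) ℂ :=
  M.submatrix id (Fin.natAdd b)

open scoped Matrix.Norms.L2Operator

section SingularValues

variable {m n : ℕ}

lemma insertionSort_ofFn_eq {f : Fin n → ℝ} {τ : Equiv.Perm (Fin n)} (h : Antitone (f ∘ τ)) :
    (List.ofFn f).insertionSort (· ≥ ·) = List.ofFn (f ∘ τ) := by
  refine List.Perm.eq_of_pairwise' (r := (· ≥ ·)) (List.pairwise_insertionSort _ _) ?_
    ((List.perm_insertionSort _ _).trans (τ.ofFn_comp_perm f).symm)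
  exact List.pairwise_ofFn.2 fun i j hij => h hij.le

/-- The singular values are the square roots of the eigenvalues of `Mᴴ * M`, listed in
decreasing order. -/
lemma exists_perm_sval (M : Matrix (Fin m) (Fin n) ℂ) :
    ∃ τ : Equiv.Perm (Fin n),
      (∀ i j : Fin n, i ≤ j → sval M j ≤ sval M i) ∧
      (∀ i : Fin n, sval M i =
        √((Matrix.isHermitian_conjTranspose_mul_self M).eigenvalues (τ i))) ∧
      ∀ j, n ≤ j → sval M j = 0 := by
  set f : Fin n → ℝ := fun i =>
    √((Matrix.isHermitian_conjTranspose_mul_self M).eigenvalues i)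
  set τ := Tuple.sort (fun i => -f i)
  have hτ : Antitone (f ∘ τ) := fun i j hij => by
    simpa using Tuple.monotone_sort (fun i => -f i) hij
  have hs : ∀ j, sval M j = (List.ofFn (f ∘ τ)).getD j 0 := fun j => by
    rw [sval, List.map_ofFn, ← insertionSort_ofFn_eq hτ]; rfl
  have hi : ∀ i : Fin n, sval M i = f (τ i) := fun i => by
    rw [hs, List.getD_eq_getElem _ _ (by simp)]; simp
  refine ⟨τ, fun i j hij => ?_, hi, fun j hj => ?_⟩
  · rw [hi, hi]; exact hτ hij
  · rw [hs, List.getD_eq_default _ _ (by simpa using hj)]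

lemma sval_eq_zero_of_le (M : Matrix (Fin m) (Fin n) ℂ) {j : ℕ} (hj : n ≤ j) :
    sval M j = 0 :=
  (exists_perm_sval M).choose_spec.2.2 j hj

lemma sval_nonneg (M : Matrix (Fin m) (Fin n) ℂ) (j : ℕ) : 0 ≤ sval M j := by
  rcases lt_or_ge j n with hj | hj
  · obtain ⟨τ, -, h, -⟩ := exists_perm_sval M
    rw [h ⟨j, hj⟩]
    exact Real.sqrt_nonneg _
  · exact (sval_eq_zero_of_le M hj).ge

lemma sval_antitone (M : Matrix (Fin m) (Fin n) ℂ) : Antitone (sval M) := by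
  intro i j hij
  rcases lt_or_ge j n with hj | hj
  · exact (exists_perm_sval M).choose_spec.1 ⟨i, hij.trans_lt hj⟩ ⟨j, hj⟩ hij
  · rw [sval_eq_zero_of_le M hj]
    exact sval_nonneg M i

open scoped ComplexOrder in
/-- A basis of right singular vectors diagonalizes the quadratic form `x ↦ ‖M x‖ ^ 2`. -/
lemma exists_basis_norm_sq_eq (M : Matrix (Fin m) (Fin n) ℂ) :
    ∃ b : OrthonormalBasis (Fin n) ℂ (EuclideanSpace ℂ (Fin n)),
      ∀ x, ‖toEuclideanLin M x‖ ^ 2 = ∑ i : Fin n, sval M i ^ 2 * ‖b.repr x i‖ ^ 2 := by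
  obtain ⟨τ, -, hτ, -⟩ := exists_perm_sval M
  set hM := Matrix.isHermitian_conjTranspose_mul_self M
  have hpos : ∀ i, 0 ≤ hM.eigenvalues i :=
    (Matrix.posSemidef_conjTranspose_mul_self M).eigenvalues_nonneg
  refine ⟨hM.eigenvectorBasis.reindex τ.symm, fun x => ?_⟩
  have hadj : ∀ y z, inner ℂ (toEuclideanLin M y) (toEuclideanLin M z) =
      inner ℂ (toEuclideanLin (Mᴴ * M) y) z := fun y z => by
    rw [toLpLin_mul_same, LinearMap.comp_apply, Matrix.toEuclideanLin_conjTranspose_eq_adjoint,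
      LinearMap.adjoint_inner_left]
  have heig : ∀ i, toEuclideanLin (Mᴴ * M) (hM.eigenvectorBasis i) =
      (hM.eigenvalues i : ℂ) • hM.eigenvectorBasis i := fun i => by
    ext j
    simpa [toLpLin_apply] using congrFun (hM.mulVec_eigenvectorBasis i) j
  have hx : toEuclideanLin M x =
      ∑ i, hM.eigenvectorBasis.repr x i • toEuclideanLin M (hM.eigenvectorBasis i) := by
    conv_lhs => rw [← hM.eigenvectorBasis.sum_repr x]
    simp only [map_sum, map_smul]
  have key : ‖toEuclideanLin M x‖ ^ 2 =
      ∑ i, hM.eigenvalues i * ‖hM.eigenvectorBasis.repr x i‖ ^ 2 := by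
    have h : ((‖toEuclideanLin M x‖ ^ 2 : ℝ) : ℂ) =
        ((∑ i, hM.eigenvalues i * ‖hM.eigenvectorBasis.repr x i‖ ^ 2 : ℝ) : ℂ) := by
      push_cast
      rw [← Complex.coe_algebraMap, ← inner_self_eq_norm_sq_to_K]
      conv_lhs => rw [hx, sum_inner, ← hx]
      refine Finset.sum_congr rfl fun i _ => ?_
      rw [inner_smul_left, hadj, heig, inner_smul_left, ← OrthonormalBasis.repr_apply_apply,
        Complex.conj_ofReal]
      have := RCLike.conj_mul (hM.eigenvectorBasis.repr x i)
      simp only [Complex.coe_algebraMap] at this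
      linear_combination (hM.eigenvalues i : ℂ) * this
    exact_mod_cast h
  rw [key, ← Equiv.sum_comp τ]
  refine Finset.sum_congr rfl fun i _ => ?_
  rw [hτ, Real.sq_sqrt (hpos _)]
  simp

lemma norm_toEuclideanLin_le (M : Matrix (Fin m) (Fin n) ℂ) (x : EuclideanSpace ℂ (Fin n)) :
    ‖toEuclideanLin M x‖ ≤ ‖M‖ * ‖x‖ :=
  M.l2_opNorm_mulVec x

lemma l2_opNorm_le_sval_zero (M : Matrix (Fin m) (Fin n) ℂ) : ‖M‖ ≤ sval M 0 := by
  obtain ⟨b, hb⟩ := exists_basis_norm_sq_eq M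
  rw [l2_opNorm_def]
  refine ContinuousLinearMap.opNorm_le_bound _ (sval_nonneg M 0) fun x => ?_
  change ‖toEuclideanLin M x‖ ≤ _
  refine le_of_sq_le_sq ?_ (mul_nonneg (sval_nonneg M 0) (norm_nonneg x))
  rw [hb, mul_pow, ← b.repr.norm_map x, EuclideanSpace.norm_sq_eq, Finset.mul_sum]
  gcongr with i
  · exact sval_nonneg M i
  · exact sval_antitone M (Nat.zero_le _)

lemma sval_mul_mul_le {a b : ℕ} (L : Matrix (Fin a) (Fin m) ℂ) (M : Matrix (Fin m) (Fin n) ℂ)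
    (R : Matrix (Fin n) (Fin b) ℂ) (j : ℕ) :
    sval (L * M * R) j ≤ ‖L‖ * ‖R‖ * sval M j := by
  have hM0 := sval_nonneg M j
  rcases le_or_gt b j with hj | hj
  · rw [sval_eq_zero_of_le _ hj]
    positivity
  obtain ⟨v, hv⟩ := exists_basis_norm_sq_eq M
  obtain ⟨w, hw⟩ := exists_basis_norm_sq_eq (L * M * R)
  -- A nonzero `x` supported on the first `j + 1` coordinates of `w`, for which `R x` has its
  -- first `j` coordinates in `v` equal to zero.
  obtain ⟨x, hx0, hxw, hxv⟩ : ∃ x : EuclideanSpace ℂ (Fin b), x ≠ 0 ∧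
      (∀ i : Fin b, j < i → w.repr x i = 0) ∧
      ∀ i : Fin n, (i : ℕ) < j → v.repr (toEuclideanLin R x) i = 0 := by
    let φ : EuclideanSpace ℂ (Fin b) →ₗ[ℂ]
        ((Finset.Ioi (⟨j, hj⟩ : Fin b)) → ℂ) × (Fin j → ℂ) :=
      LinearMap.prod
        (LinearMap.pi fun i => (EuclideanSpace.proj (i : Fin b)).toLinearMap ∘ₗ
          w.repr.toLinearEquiv.toLinearMap)
        (LinearMap.pi fun i => if h : (i : ℕ) < n then
          (EuclideanSpace.proj (⟨i, h⟩ : Fin n)).toLinearMap ∘ₗ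
            v.repr.toLinearEquiv.toLinearMap ∘ₗ toEuclideanLin R else 0)
    have hφ : LinearMap.ker φ ≠ ⊥ := by
      apply LinearMap.ker_ne_bot_of_finrank_lt
      simp only [Module.finrank_prod, Module.finrank_fintype_fun_eq_card, Fintype.card_coe,
        Fin.card_Ioi, Fintype.card_fin, finrank_euclideanSpace]
      omega
    obtain ⟨x, hx, hx0⟩ := (Submodule.ne_bot_iff _).1 hφ
    have hx1 : φ x = 0 := hx
    refine ⟨x, hx0, fun i hi => ?_, fun i hi => ?_⟩
    · exact congrFun (congrArg Prod.fst hx1) ⟨i, by simpa [Fin.lt_def] using hi⟩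
    · simpa [φ] using congrFun (congrArg Prod.snd hx1) ⟨i, hi⟩
  set y := toEuclideanLin R x
  have hlow : sval (L * M * R) j * ‖x‖ ≤ ‖toEuclideanLin (L * M * R) x‖ := by
    refine le_of_sq_le_sq ?_ (norm_nonneg _)
    rw [hw, mul_pow, ← w.repr.norm_map x, EuclideanSpace.norm_sq_eq, Finset.mul_sum]
    refine Finset.sum_le_sum fun i _ => ?_
    rcases lt_or_ge j i with hi | hi
    · simp [hxw i hi]
    · gcongr
      · exact sval_nonneg _ _
      · exact sval_antitone _ hi
  have hup : ‖toEuclideanLin M y‖ ≤ sval M j * ‖y‖ := by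
    refine le_of_sq_le_sq ?_ (by positivity)
    rw [hv, mul_pow, ← v.repr.norm_map y, EuclideanSpace.norm_sq_eq, Finset.mul_sum]
    refine Finset.sum_le_sum fun i _ => ?_
    rcases lt_or_ge (i : ℕ) j with hi | hi
    · simp [hxv i hi]
    · gcongr
      · exact sval_nonneg _ _
      · exact sval_antitone _ hi
  refine le_of_mul_le_mul_right ?_ (norm_pos_iff.2 hx0)
  calc sval (L * M * R) j * ‖x‖ ≤ ‖toEuclideanLin (L * M * R) x‖ := hlow
    _ = ‖toEuclideanLin L (toEuclideanLin M y)‖ := by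
      simp only [toLpLin_mul_same, LinearMap.comp_apply, y]
    _ ≤ ‖L‖ * (sval M j * (‖R‖ * ‖x‖)) := by
      grw [norm_toEuclideanLin_le, hup, norm_toEuclideanLin_le R x]
    _ = ‖L‖ * ‖R‖ * sval M j * ‖x‖ := by ring

end SingularValues

lemma schatten_le_mul_schatten {a b c d : ℕ} {M : Matrix (Fin a) (Fin b) ℂ}
    {N : Matrix (Fin c) (Fin d) ℂ} {t : ℝ} (ht : 0 ≤ t) (h : ∀ j, sval M j ≤ t * sval N j)
    {p : ℝ≥0∞} (hp : 1 ≤ p) : schatten p M ≤ t * schatten p N := by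
  unfold schatten
  split_ifs with hptop
  · exact h 0
  have hp0 : 0 < p.toReal := ENNReal.toReal_pos (by positivity) hptop
  have extend : ∀ {r s : ℕ} (K : Matrix (Fin r) (Fin s) ℂ), s ≤ max b d →
      ∑ j ∈ Finset.range s, sval K j ^ p.toReal =
        ∑ j ∈ Finset.range (max b d), sval K j ^ p.toReal := fun K hs => by
    refine Finset.sum_subset (Finset.range_subset_range.2 hs) fun j _ hj => ?_
    rw [sval_eq_zero_of_le K (by simpa using hj), Real.zero_rpow hp0.ne']
  rw [extend M (le_max_left _ _), extend N (le_max_right _ _)]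
  have hN : 0 ≤ ∑ j ∈ Finset.range (max b d), sval N j ^ p.toReal :=
    Finset.sum_nonneg fun j _ => Real.rpow_nonneg (sval_nonneg N j) _
  calc (∑ j ∈ Finset.range (max b d), sval M j ^ p.toReal) ^ (1 / p.toReal)
      ≤ (t ^ p.toReal * ∑ j ∈ Finset.range (max b d), sval N j ^ p.toReal) ^ (1 / p.toReal) := by
        refine Real.rpow_le_rpow (Finset.sum_nonneg fun j _ =>
          Real.rpow_nonneg (sval_nonneg M j) _) ?_ (by positivity)
        rw [Finset.mul_sum]
        refine Finset.sum_le_sum fun j _ => ?_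
        rw [← Real.mul_rpow ht (sval_nonneg N j)]
        exact Real.rpow_le_rpow (sval_nonneg M j) (h j) hp0.le
    _ = t * (∑ j ∈ Finset.range (max b d), sval N j ^ p.toReal) ^ (1 / p.toReal) := by
        rw [Real.mul_rpow (by positivity) hN, ← Real.rpow_mul ht, mul_one_div_cancel hp0.ne',
          Real.rpow_one]

section Blocks

variable {a b c : ℕ}

open scoped ComplexOrder in
lemma mul_rpinv {M : Matrix (Fin a) (Fin b) ℂ} (hM : M.rank = a) : M * rpinv M = 1 := by
  have hr : (M * Mᴴ).rank = a := by rw [rank_self_mul_conjTranspose, hM]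
  have hu : IsUnit (M * Mᴴ) := by
    rw [← Matrix.mulVec_surjective_iff_isUnit]
    have htop : LinearMap.range (M * Mᴴ).mulVecLin = ⊤ := by
      apply Submodule.eq_top_of_finrank_eq
      rw [← Matrix.rank, hr]
      simp
    exact LinearMap.range_eq_top.1 htop
  rw [rpinv, ← Matrix.mul_assoc, Matrix.mul_nonsing_inv _ ((Matrix.isUnit_iff_isUnit_det _).1 hu)]

lemma colsL_conjTranspose_mul_colsL {M : Matrix (Fin a) (Fin (b + c)) ℂ} (h : Mᴴ * M = 1) :
    (colsL M)ᴴ * colsL M = 1 := by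
  rw [colsL, conjTranspose_submatrix, ← submatrix_mul _ _ _ _ _ Function.bijective_id, h]
  exact submatrix_one _ (Fin.castAdd_injective b c)

lemma colsR_conjTranspose_mul_colsR {M : Matrix (Fin a) (Fin (b + c)) ℂ} (h : Mᴴ * M = 1) :
    (colsR M)ᴴ * colsR M = 1 := by
  rw [colsR, conjTranspose_submatrix, ← submatrix_mul _ _ _ _ _ Function.bijective_id, h]
  exact submatrix_one _ (Fin.natAdd_injective c b)

lemma colsL_conjTranspose_mul_colsR {M : Matrix (Fin a) (Fin (b + c)) ℂ} (h : Mᴴ * M = 1) :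
    (colsL M)ᴴ * colsR M = 0 := by
  rw [colsL, colsR, conjTranspose_submatrix, ← submatrix_mul _ _ _ _ _ Function.bijective_id, h]
  ext i j
  have : Fin.castAdd c i ≠ Fin.natAdd b j := by
    simp only [ne_eq, Fin.ext_iff, Fin.val_castAdd, Fin.val_natAdd]
    omega
  simp [this]

lemma colsR_conjTranspose_mul_colsL {M : Matrix (Fin a) (Fin (b + c)) ℂ} (h : Mᴴ * M = 1) :
    (colsR M)ᴴ * colsL M = 0 := by
  simpa using congrArg conjTranspose (colsL_conjTranspose_mul_colsR h)

lemma mul_diagRect_mul_conjTranspose {k e f : ℕ} (σ : ℕ → ℝ)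
    (U : Matrix (Fin a) (Fin (k + e)) ℂ) (V : Matrix (Fin b) (Fin (k + f)) ℂ) :
    U * diagRect σ 0 (k + e) (k + f) * Vᴴ =
      colsL U * diagRect σ 0 k k * (colsL V)ᴴ + colsR U * diagRect σ k e f * (colsR V)ᴴ := by
  have hcross : ∀ (i : Fin k) (j : ℕ), (i : ℕ) ≠ k + j := fun i j => by omega
  have hcross' : ∀ (i : Fin k) (j : ℕ), k + j ≠ (i : ℕ) := fun i j => by omega
  ext i j
  simp [Matrix.mul_apply, Matrix.add_apply, Fin.sum_univ_add, diagRect, colsL, colsR, hcross,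
    hcross']

lemma diagRect_mul_conjTranspose (σ : ℕ → ℝ) (off : ℕ) :
    diagRect σ off a b * (diagRect σ off a b)ᴴ =
      diagonal fun i : Fin a => if (i : ℕ) < b then ((σ (off + i) ^ 2 : ℝ) : ℂ) else 0 := by
  ext i j
  rw [Matrix.mul_apply, diagonal_apply]
  simp only [conjTranspose_apply, diagRect, of_apply, apply_ite star, star_zero, ite_mul, zero_mul]
  by_cases hi : (i : ℕ) < b
  · rw [Finset.sum_eq_single (⟨i, hi⟩ : Fin b)]
    · by_cases hij : i = j
      · subst hij
        simp [hi, sq]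
      · have : (j : ℕ) ≠ i := fun h => hij (Fin.ext h.symm)
        simp [hij, this]
    · intro l _ hl
      have : (i : ℕ) ≠ l := fun h => hl (Fin.ext h.symm)
      simp [this]
    · simp
  · rw [Finset.sum_eq_zero]
    · simp [hi]
    · intro l _
      have : (i : ℕ) ≠ l := by omega
      simp [this]

lemma diagRect_self_eq_diagonal (σ : ℕ → ℝ) (off : ℕ) :
    diagRect σ off a a = diagonal fun i : Fin a => (σ (off + i) : ℂ) := by
  ext i j
  simp [diagRect, diagonal_apply, Fin.ext_iff]

lemma l2_opNorm_le_one_of_conjTranspose_mul_self {M : Matrix (Fin a) (Fin b) ℂ}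
    (h : Mᴴ * M = 1) : ‖M‖ ≤ 1 := by
  have hone : ‖(1 : Matrix (Fin b) (Fin b) ℂ)‖ ≤ 1 := by
    rw [← diagonal_one, l2_opNorm_diagonal]
    exact (pi_norm_le_iff_of_nonneg zero_le_one).2 fun i => by simp
  have := l2_opNorm_conjTranspose_mul_self M
  rw [h] at this
  nlinarith [norm_nonneg M]

lemma l2_opNorm_one_sub_le_one {M : Matrix (Fin a) (Fin b) ℂ} (h : Mᴴ * M = 1) :
    ‖1 - M * Mᴴ‖ ≤ 1 := by
  have hsq : (1 - M * Mᴴ)ᴴ * (1 - M * Mᴴ) = 1 - M * Mᴴ := by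
    have : M * Mᴴ * (M * Mᴴ) = M * Mᴴ := by
      rw [Matrix.mul_assoc, ← Matrix.mul_assoc Mᴴ, h, Matrix.one_mul]
    simp only [conjTranspose_sub, conjTranspose_one, conjTranspose_mul, conjTranspose_conjTranspose,
      Matrix.sub_mul, Matrix.mul_sub, Matrix.one_mul, Matrix.mul_one, this, sub_self, sub_zero]
  have := l2_opNorm_conjTranspose_mul_self (1 - M * Mᴴ)
  rw [hsq] at this
  nlinarith [norm_nonneg (1 - M * Mᴴ)]

lemma pow_mul_eq_mul_pow {X : Matrix (Fin a) (Fin a) ℂ} {Y : Matrix (Fin a) (Fin b) ℂ}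
    {Z : Matrix (Fin b) (Fin b) ℂ} (h : X * Y = Y * Z) (q : ℕ) : X ^ q * Y = Y * Z ^ q := by
  induction q with
  | zero => simp
  | succ q ih => rw [pow_succ, Matrix.mul_assoc, h, ← Matrix.mul_assoc, ih, Matrix.mul_assoc,
      ← pow_succ]

end Blocks

lemma power_iteration_eq {k e f a b : ℕ} (q : ℕ) {U₁ : Matrix (Fin a) (Fin k) ℂ}
    {U₂ : Matrix (Fin a) (Fin e) ℂ} {V₁ : Matrix (Fin b) (Fin k) ℂ} {V₂ : Matrix (Fin b) (Fin f) ℂ}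
    {S : Matrix (Fin k) (Fin k) ℂ} {T : Matrix (Fin e) (Fin f) ℂ}
    (hU₁ : U₁ᴴ * U₁ = 1) (hU₂ : U₂ᴴ * U₂ = 1) (hU₁₂ : U₁ᴴ * U₂ = 0) (hU₂₁ : U₂ᴴ * U₁ = 0)
    (hV₁ : V₁ᴴ * V₁ = 1) (hV₂ : V₂ᴴ * V₂ = 1) (hV₁₂ : V₁ᴴ * V₂ = 0) (hV₂₁ : V₂ᴴ * V₁ = 0)
    {A : Matrix (Fin a) (Fin b) ℂ} (hA : A = U₁ * S * V₁ᴴ + U₂ * T * V₂ᴴ) :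
    (A * Aᴴ) ^ q * A =
      U₁ * ((S * Sᴴ) ^ q * S) * V₁ᴴ + U₂ * ((T * Tᴴ) ^ q * T) * V₂ᴴ := by
  have hAV₁ : A * V₁ = U₁ * S := by
    rw [hA, Matrix.add_mul, Matrix.mul_assoc, hV₁, Matrix.mul_assoc _ V₂ᴴ, hV₂₁]
    simp
  have hAV₂ : A * V₂ = U₂ * T := by
    rw [hA, Matrix.add_mul, Matrix.mul_assoc, hV₁₂, Matrix.mul_assoc _ V₂ᴴ, hV₂]
    simp
  have hAU₁ : Aᴴ * U₁ = V₁ * Sᴴ := by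
    rw [hA]
    simp only [conjTranspose_add, conjTranspose_mul, conjTranspose_conjTranspose, Matrix.add_mul,
      Matrix.mul_assoc, hU₁, hU₂₁, Matrix.mul_zero, Matrix.mul_one, add_zero]
  have hAU₂ : Aᴴ * U₂ = V₂ * Tᴴ := by
    rw [hA]
    simp only [conjTranspose_add, conjTranspose_mul, conjTranspose_conjTranspose, Matrix.add_mul,
      Matrix.mul_assoc, hU₁₂, hU₂, Matrix.mul_zero, Matrix.mul_one, zero_add]
  have h₁ : A * Aᴴ * U₁ = U₁ * (S * Sᴴ) := by
    rw [Matrix.mul_assoc, hAU₁, ← Matrix.mul_assoc, hAV₁, Matrix.mul_assoc]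
  have h₂ : A * Aᴴ * U₂ = U₂ * (T * Tᴴ) := by
    rw [Matrix.mul_assoc, hAU₂, ← Matrix.mul_assoc, hAV₂, Matrix.mul_assoc]
  calc (A * Aᴴ) ^ q * A = (A * Aᴴ) ^ q * (U₁ * S * V₁ᴴ + U₂ * T * V₂ᴴ) := by rw [← hA]
    _ = _ := by
      rw [Matrix.mul_add]
      simp only [← Matrix.mul_assoc, pow_mul_eq_mul_pow h₁, pow_mul_eq_mul_pow h₂]

/-- Theorem 3.3 (left): Schatten-p norm bound for the sines of the canonical angles
between the column spaces of `U_k` and `Û`. -/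
theorem schatten_angles_left
    {k m₂ n₂ ρ : ℕ} (q : ℕ) (hk : 1 ≤ k)
    (A : Matrix (Fin (k + m₂)) (Fin (k + n₂)) ℂ)
    (U : Matrix (Fin (k + m₂)) (Fin (k + m₂)) ℂ)
    (V : Matrix (Fin (k + n₂)) (Fin (k + n₂)) ℂ)
    (σ : ℕ → ℝ)
    (hU : Uᴴ * U = 1) (hU' : U * Uᴴ = 1)
    (hV : Vᴴ * V = 1) (hV' : V * Vᴴ = 1)
    (hσ0 : ∀ i, 0 ≤ σ i) (hσm : ∀ i j, i ≤ j → σ j ≤ σ i)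
    (hA : A = U * diagRect σ 0 (k + m₂) (k + n₂) * Vᴴ)
    (hrank : 0 < σ (k - 1)) (hgap : σ k < σ (k - 1))
    (Ω : Matrix (Fin (k + n₂)) (Fin (k + ρ)) ℂ)
    (hΩ : ((colsL V)ᴴ * Ω).rank = k)
    (Q : Matrix (Fin (k + m₂)) (Fin (k + ρ)) ℂ)
    (R : Matrix (Fin (k + ρ)) (Fin (k + ρ)) ℂ)
    (hQ : Qᴴ * Q = 1) (hR : R.BlockTriangular id)
    (hQR : (A * Aᴴ) ^ q * A * Ω = Q * R)
    (UB : Matrix (Fin (k + ρ)) (Fin (k + ρ)) ℂ)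
    (Vh : Matrix (Fin (k + n₂)) (Fin (k + ρ)) ℂ)
    (σh : ℕ → ℝ)
    (hUB : UBᴴ * UB = 1) (hUB' : UB * UBᴴ = 1)
    (hVh : Vhᴴ * Vh = 1)
    (hσh0 : ∀ i, 0 ≤ σh i) (hσhm : ∀ i j, i ≤ j → σh j ≤ σh i)
    (hB : Qᴴ * A = UB * diagRect σh 0 (k + ρ) (k + ρ) * Vhᴴ)
    :
    ∀ p : ℝ≥0∞, 1 ≤ p →
      schatten p ((1 - Q * UB * (Q * UB)ᴴ) * colsL U) ≤
        (σ k / σ (k - 1)) ^ (2 * q) * (schatten p (diagRect σ k m₂ n₂) / σ (k - 1)) * sval ((colsR V)ᴴ * Ω * rpinv ((colsL V)ᴴ * Ω)) 0 := by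
  intro p hp
  set s := σ (k - 1)
  set W := (colsR V)ᴴ * Ω * rpinv ((colsL V)ᴴ * Ω) with hW
  set S := diagRect σ 0 k k with hS
  set T := diagRect σ k m₂ n₂ with hT
  have hσk : ∀ i : Fin k, s ≤ σ (0 + i) := fun i => hσm _ _ (by omega)
  have hσi : ∀ i : Fin k, (σ (0 + i) : ℂ) ≠ 0 := fun i =>
    Complex.ofReal_ne_zero.2 (hrank.trans_le (hσk i)).ne'
  set E : Matrix (Fin k) (Fin k) ℂ := diagonal fun i => ((σ (0 + i) : ℂ) ^ (2 * q + 1))⁻¹ with hE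
  have hSE : (S * Sᴴ) ^ q * S * E = 1 := by
    rw [hS, diagRect_mul_conjTranspose, diagRect_self_eq_diagonal, diagonal_pow,
      diagonal_mul_diagonal, hE, diagonal_mul_diagonal, ← diagonal_one]
    congr 1
    ext i
    have := hσi i
    simp only [Pi.pow_apply, Fin.is_lt, if_true, Complex.ofReal_pow]
    rw [← pow_mul, ← pow_succ, mul_inv_cancel₀ (pow_ne_zero _ this)]
  have hEnorm : ‖E‖ ≤ (s ^ (2 * q + 1))⁻¹ := by
    rw [hE, l2_opNorm_diagonal]
    refine (pi_norm_le_iff_of_nonneg (by positivity)).2 fun i => ?_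
    rw [norm_inv, norm_pow, Complex.norm_real, Real.norm_of_nonneg (hσ0 _)]
    gcongr
    exact hσk i
  have hTnorm : ‖(T * Tᴴ) ^ q‖ ≤ σ k ^ (2 * q) := by
    rw [hT, diagRect_mul_conjTranspose, diagonal_pow, l2_opNorm_diagonal]
    have hk0 := hσ0 k
    refine (pi_norm_le_iff_of_nonneg (by positivity)).2 fun i => ?_
    rw [Pi.pow_apply, norm_pow, pow_mul]
    gcongr
    split_ifs
    · rw [Complex.norm_real, Real.norm_of_nonneg (by positivity)]
      gcongr
      · exact hσ0 _
      · exact hσm _ _ (Nat.le_add_right _ _)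
    · simpa using sq_nonneg (σ k)
  have hpow := power_iteration_eq q (colsL_conjTranspose_mul_colsL hU)
    (colsR_conjTranspose_mul_colsR hU) (colsL_conjTranspose_mul_colsR hU)
    (colsR_conjTranspose_mul_colsL hU) (colsL_conjTranspose_mul_colsL hV)
    (colsR_conjTranspose_mul_colsR hV) (colsL_conjTranspose_mul_colsR hV)
    (colsR_conjTranspose_mul_colsL hV) (hA.trans (mul_diagRect_mul_conjTranspose σ U V))
  rw [← hS, ← hT] at hpow
  have hP : Q * UB * (Q * UB)ᴴ = Q * Qᴴ := by
    rw [conjTranspose_mul, Matrix.mul_assoc, ← Matrix.mul_assoc UB, hUB', Matrix.one_mul]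
  rw [hP]
  set P := 1 - Q * Qᴴ with hPdef
  have hPQ : P * Q = 0 := by
    rw [hPdef, Matrix.sub_mul, Matrix.one_mul, Matrix.mul_assoc, hQ, Matrix.mul_one, sub_self]
  have hrange : Q * R * rpinv ((colsL V)ᴴ * Ω) * E =
      colsL U + colsR U * (T * Tᴴ) ^ q * T * (W * E) := by
    have hinv := mul_rpinv hΩ
    calc Q * R * rpinv ((colsL V)ᴴ * Ω) * E
        = colsL U * ((S * Sᴴ) ^ q * S) * ((colsL V)ᴴ * Ω * rpinv ((colsL V)ᴴ * Ω)) * E +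
            colsR U * ((T * Tᴴ) ^ q * T) * W * E := by
          rw [← hQR, hpow, hW]
          simp only [Matrix.add_mul, Matrix.mul_assoc]
      _ = colsL U * ((S * Sᴴ) ^ q * S * E) + colsR U * (T * Tᴴ) ^ q * T * (W * E) := by
          rw [hinv]
          simp only [Matrix.mul_assoc, Matrix.one_mul]
      _ = _ := by rw [hSE, Matrix.mul_one]
  have hzero : P * (Q * R * rpinv ((colsL V)ᴴ * Ω) * E) = 0 := by
    simp only [← Matrix.mul_assoc, hPQ, Matrix.zero_mul]
  have hPU : P * colsL U = -(P * colsR U * (T * Tᴴ) ^ q) * T * (W * E) := by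
    rw [hrange, Matrix.mul_add] at hzero
    rw [eq_neg_of_add_eq_zero_left hzero]
    simp only [Matrix.neg_mul, Matrix.mul_assoc]
  have hL : ‖-(P * colsR U * (T * Tᴴ) ^ q)‖ ≤ σ k ^ (2 * q) := by
    rw [norm_neg]
    calc ‖P * colsR U * (T * Tᴴ) ^ q‖ ≤ 1 * 1 * σ k ^ (2 * q) := by
          grw [l2_opNorm_mul, l2_opNorm_mul, l2_opNorm_one_sub_le_one hQ,
            l2_opNorm_le_one_of_conjTranspose_mul_self (colsR_conjTranspose_mul_colsR hU), hTnorm]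
      _ = _ := by ring
  have hR' : ‖W * E‖ ≤ sval W 0 * (s ^ (2 * q + 1))⁻¹ := by
    have := sval_nonneg W 0
    grw [l2_opNorm_mul, l2_opNorm_le_sval_zero W, hEnorm]
  have hW0 := sval_nonneg W 0
  have hk0 := hσ0 k
  have hsval : ∀ j, sval (P * colsL U) j ≤
      σ k ^ (2 * q) * (sval W 0 * (s ^ (2 * q + 1))⁻¹) * sval T j := fun j => by
    have := sval_nonneg T j
    rw [hPU]
    grw [sval_mul_mul_le, hL, hR']
  refine (schatten_le_mul_schatten (by positivity) hsval hp).trans_eq ?_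
  rw [div_pow, pow_succ s]
  field_simp
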